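/- An implicative-orthomodular algebra X is a quantum-Wajsberg algebra if and only if it satisfies condition (IOM₂): (x ⊓ y)→(y ⊓ x) = 1 for all x, y ∈ X. -/

import Mathlib

/-!
Write `x ⊕ y = x* → y`. This is a commutative monoid with unit `0`, `*` is an involution with
`x ⊕ x* = 0*`, and `x ⊓ y = ((x ⊕ y*)* ⊕ y*)*`. In these terms (IOM) says that the relation
`x ≤ y ↔ ∃ z, y = x ⊕ z` is the order `≤_Q`, and the operation `⊕`, restricted to pairs with
`x ≤ y*`, behaves as in an effect algebra: `*` is antitone (`le_anti`), `x ⊓ y ≤ y`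
(`meet_le`), and `x ⊕ (y ⊓ x*) = x ⊕ y` (`add_meet`).

Both (QW) and (IOM₂) are equivalent to the identity `(a ⊓ b) ⊓ a = b ⊓ a`. The tool is
the absorption `(p ⊓ a) ⊓ c = p ⊓ c` for `c ≤ a` (`meet_absorb`).

* From (QW) with `z = x` the identity follows after cancelling `a*`. Given the identity,
  `(b ⊓ a) ⊓ (a ⊓ b) = ((b ⊓ a) ⊓ b) ⊓ (a ⊓ b) = a ⊓ b`, which is (IOM₂).
* Given (IOM₂), put `p = a ⊓ b`, `q = b ⊓ a`, `r = p ⊓ a`. Then `r ≤ q` by monotonicity, so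
  `r = r ⊓ q = p ⊓ q = q` by absorption, which is the identity.
* In every IOM algebra `(a → b) ⊓ (a → c) = a → ((b ⊓ a) ⊓ (c ⊓ a))` (`meet_add`), and the
  identity with absorption turns `(b ⊓ a) ⊓ (c ⊓ a)` into `(a ⊓ b) ⊓ (c ⊓ a)`, which is (QW).
-/

/-- An involutive BE algebra `(X, →, 0, 1)`. -/
structure InvBE (X : Type*) where
  imp : X → X → X
  one : X
  zero : X
  imp_self : ∀ x, imp x x = one
  imp_one : ∀ x, imp x one = one
  one_imp : ∀ x, imp one x = x
  exchange : ∀ x y z, imp x (imp y z) = imp y (imp x z)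
  zero_imp : ∀ x, imp zero x = one
  imp_involutive : ∀ x, imp (imp x zero) zero = x

namespace InvBE

variable {X : Type*} (A : InvBE X)

/-- `x* := x → 0`. -/
def neg (x : X) : X := A.imp x A.zero

/-- `x ⊓ y := ((x* → y*) → y*)*`. -/
def inf (x y : X) : X := A.neg (A.imp (A.imp (A.neg x) (A.neg y)) (A.neg y))

/-- `x ∪ y := (x → y) → y`. -/
def sup (x y : X) : X := A.imp (A.imp x y) y

/-- `x ⊙ y := (x → y*)*`. -/
def odot (x y : X) : X := A.neg (A.imp x (A.neg y))

/-- `x ⊕ y := (x* ⊙ y*)*`. -/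
def oplus (x y : X) : X := A.neg (A.odot (A.neg x) (A.neg y))

/-- `x ≤_Q y` iff `x = x ⊓ y`. -/
def leQ (x y : X) : Prop := x = A.inf x y

/-- `x ≤ y` iff `x → y = 1`. -/
def le (x y : X) : Prop := A.imp x y = A.one

/-- (IOM): `x ⊓ (y → x) = x` for all `x, y`. -/
def IOM : Prop := ∀ x y, A.inf x (A.imp y x) = x

/-- (QW): `x → ((x ⊓ y) ⊓ (z ⊓ x)) = (x → y) ⊓ (x → z)` for all `x, y, z`. -/
def QW : Prop :=
  ∀ x y z, A.imp x (A.inf (A.inf x y) (A.inf z x)) = A.inf (A.imp x y) (A.imp x z)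

/-- A filter: nonempty, closed under `⊙`, upward closed for `≤_Q`. -/
def IsFilter (F : Set X) : Prop :=
  F.Nonempty ∧ (∀ x ∈ F, ∀ y ∈ F, A.odot x y ∈ F) ∧
    (∀ x ∈ F, ∀ y : X, A.leQ x y → y ∈ F)

/-- A deductive system: contains `1` and is closed under modus ponens. -/
def IsDS (F : Set X) : Prop :=
  A.one ∈ F ∧ ∀ x y : X, x ∈ F → A.imp x y ∈ F → y ∈ F

/-- `pow x n` is the `⊙`-product of `n + 1` copies of `x`, i.e. `x^(n+1)`. -/
def pow (x : X) : ℕ → X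
  | 0 => x
  | n + 1 => A.odot x (pow x n)

/-- A maximal filter: proper and not contained in any other proper filter. -/
def IsMaximalFilter (F : Set X) : Prop :=
  A.IsFilter F ∧ F ≠ Set.univ ∧
    ∀ G : Set X, A.IsFilter G → F ⊆ G → G ≠ Set.univ → G = F

/-- A strongly maximal filter: for every `x ∉ F` there is `n ≥ 1` with `(xⁿ)* ∈ F`. -/
def IsStronglyMaximalFilter (F : Set X) : Prop :=
  A.IsFilter F ∧ ∀ x : X, x ∉ F → ∃ n : ℕ, A.neg (A.pow x n) ∈ F

/-- `x ≡_F y` iff there is `f` with `x, y ≤_Q f` and `f → x, f → y ∈ F`. -/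
def cong (F : Set X) (x y : X) : Prop :=
  ∃ f : X, A.leQ x f ∧ A.leQ y f ∧ A.imp f x ∈ F ∧ A.imp f y ∈ F

end InvBE

namespace IOMAux

/-- `x ⊓ y` in terms of the sum `⊕` (written `+`) and the involution `n`. -/
def meet {X : Type*} [AddCommMonoid X] (n : X → X) (x y : X) : X := n (n (x + n y) + n y)

/-- The order `≤_Q`, encoded as the algebraic preorder of `⊕`. -/
def QLe {X : Type*} [AddCommMonoid X] (x y : X) : Prop := ∃ z, y = x + z

/-- Implicative-orthomodular algebras in the signature `(⊕, *, 0)`, with `n 0` as the unit `1`. -/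
structure IsIOM {X : Type*} [AddCommMonoid X] (n : X → X) : Prop where
  nn : ∀ x, n (n x) = x
  compl : ∀ x, x + n x = n 0
  om : ∀ x y, meet n x (x + y) = x

section

variable {X : Type*} [AddCommMonoid X] {n : X → X}

theorem QLe.add_right {a b : X} (hab : QLe a b) (c : X) : QLe (a + c) (b + c) := by
  obtain ⟨z, rfl⟩ := hab
  exact ⟨z, by abel⟩

theorem meet_eq (h : IsIOM n) {a b : X} (hab : QLe a b) : meet n a b = a := by
  obtain ⟨z, rfl⟩ := hab
  exact h.om a z

theorem le_anti (h : IsIOM n) {a b : X} (hab : QLe a b) : QLe (n b) (n a) := by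
  refine ⟨n (a + n b), ?_⟩
  have e := congrArg n (meet_eq h hab)
  rw [meet, h.nn] at e
  rw [← e, add_comm]

/-- If `a ≤ b` then `b` is the sum of `a` and the difference `(b* ⊕ a)*`. -/
theorem add_diff (h : IsIOM n) {a b : X} (hab : QLe a b) : b = a + n (n b + a) := by
  have e1 : n (n (a + n b) + n b) = a := meet_eq h hab
  have e := congrArg n (h.om (n b) (n (a + n b)))
  rw [meet, h.nn, h.nn, add_comm (n b) (n (a + n b)), e1] at e
  rw [add_comm a]
  exact e.symm

theorem add_meet (h : IsIOM n) (a b : X) : a + meet n b (n a) = a + b := by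
  have e := add_diff h (a := a) (b := a + b) ⟨b, rfl⟩
  rw [meet, h.nn, add_comm b a]
  exact e.symm

theorem meet_add_compl (h : IsIOM n) (p a : X) : meet n p a + n a = p + n a := by
  have e := add_meet h (n a) p
  rw [h.nn] at e
  rw [add_comm, e, add_comm]

theorem meet_le (h : IsIOM n) (x y : X) : QLe (meet n x y) y := by
  have e := le_anti h (a := n y) (b := n (x + n y) + n y) ⟨_, add_comm _ _⟩
  rwa [h.nn] at e

/-- Since `c* = a* ⊕ w` for some `w`, the equality `(p ⊓ a) ⊕ a* = p ⊕ a*` gives the same with `c*`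
in place of `a*`, and `x ⊓ c` depends on `x` only through `x ⊕ c*`. -/
theorem meet_absorb (h : IsIOM n) {c a : X} (hca : QLe c a) (p : X) :
    meet n (meet n p a) c = meet n p c := by
  obtain ⟨w, hw⟩ := le_anti h hca
  have e : meet n p a + n c = p + n c := by
    rw [hw, ← add_assoc, meet_add_compl h, add_assoc]
  unfold meet at e ⊢
  rw [e]

theorem meet_mono (h : IsIOM n) {b c : X} (hbc : QLe b c) (a : X) :
    QLe (meet n b a) (meet n c a) :=
  le_anti h ((le_anti h (hbc.add_right (n a))).add_right (n a))

theorem meet_self (h : IsIOM n) (x : X) : meet n x x = x :=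
  meet_eq h ⟨0, (add_zero x).symm⟩

/-- The weaker relation `p → q = 1` says that `q ⊓ p = p`, whereas `p ≤_Q q` says `p ⊓ q = p`. -/
theorem compl_add_eq_one (h : IsIOM n) {p q : X} : n p + q = n 0 ↔ meet n q p = p := by
  constructor
  · intro e
    rw [meet, add_comm q, e, h.nn, zero_add, h.nn]
  · intro e
    rw [add_comm, ← meet_add_compl h, e, h.compl]

/-- Translation by `a*` is compatible with meets: with `C = c ⊓ a` both sides equal
`a* ⊕ (C ⊖ v)` for `v = (b ⊓ a ⊕ C*)* ≤ C`. -/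
theorem meet_add (h : IsIOM n) (a b c : X) :
    meet n (n a + b) (n a + c) = n a + meet n (meet n b a) (meet n c a) := by
  have hC : QLe (meet n c a) a := meet_le h c a
  have eB : n a + b = n a + meet n b a := by
    rw [add_comm _ (meet n b a), meet_add_compl h, add_comm]
  have eC : n a + c = n a + meet n c a := by
    rw [add_comm _ (meet n c a), meet_add_compl h, add_comm]
  rw [eB, eC]
  generalize meet n b a = B
  generalize meet n c a = C at hC
  have hC' := add_diff h (le_anti h hC)
  rw [h.nn] at hC'
  obtain ⟨v, hv⟩ : ∃ v, v = n (B + n C) := ⟨_, rfl⟩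
  obtain ⟨w, hw⟩ : ∃ w, w = n (v + n C) := ⟨_, rfl⟩
  have hvC : QLe v C := by
    have e := le_anti h (a := n C) (b := B + n C) ⟨_, add_comm _ _⟩
    rwa [h.nn, ← hv] at e
  have eCvw : C = v + w := by
    have e := add_diff h hvC
    rwa [add_comm (n C), ← hw] at e
  have hwv : n v = w + n C := by
    have e0 : QLe w (n v) := by
      rw [hw]
      exact le_anti h ⟨_, rfl⟩
    have e := add_diff h e0
    rwa [h.nn, ← eCvw] at e
  have key : QLe (n a + w) (n v) := by
    rw [hwv, add_comm w]
    exact (le_anti h hC).add_right w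
  have e1 : meet n B C = w := by rw [meet, ← hv, hw]
  have e2 : (n a + B) + n (n a + C) = n v := by
    rw [hv, h.nn, add_comm (n a) B, add_assoc, add_comm (n a) C]
    have : n a + n (C + n a) = n C := hC'.symm
    rw [add_comm C, add_comm] at this
    rw [add_comm C, add_comm (n a), this]
  have e3 := meet_eq h key
  rw [e1, meet, e2, h.nn]
  rw [meet, h.nn] at e3
  rw [← e3, eCvw]
  congr 1
  rw [add_comm]
  congr 2
  abel

theorem comm_of_qw (h : IsIOM n)
    (hq : ∀ x y z, n x + meet n (meet n x y) (meet n z x) = meet n (n x + y) (n x + z))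
    (a b : X) : meet n (meet n a b) a = meet n b a := by
  have e := hq a b a
  rw [meet_self h, add_comm (n a) a, h.compl] at e
  have e1 : meet n (n a + b) (n 0) = n a + b := by
    simp only [meet, h.nn, add_zero]
  rw [e1, add_comm, meet_add_compl h, add_comm (n a)] at e
  rw [meet, e, meet]

theorem comm_of_iom2 (h : IsIOM n) (hi : ∀ x y, n (meet n x y) + meet n y x = n 0)
    (a b : X) : meet n (meet n a b) a = meet n b a := by
  have hr : QLe (meet n (meet n a b) a) (meet n b a) := meet_mono h (meet_le h a b) a
  have e := meet_eq h hr
  rw [meet_absorb h (meet_le h b a), (compl_add_eq_one h).1 (hi b a)] at e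
  exact e.symm

theorem qw_iff (h : IsIOM n) :
    (∀ x y z, n x + meet n (meet n x y) (meet n z x) = meet n (n x + y) (n x + z)) ↔
      ∀ x y, n (meet n x y) + meet n y x = n 0 := by
  constructor
  · intro hq x y
    rw [compl_add_eq_one h, ← meet_absorb h (meet_le h x y), comm_of_qw h hq, meet_self h]
  · intro hi x y z
    rw [meet_add h, ← comm_of_iom2 h hi x y, meet_absorb h (meet_le h z x)]

end

end IOMAux

namespace InvBE

variable {X : Type*} (A : InvBE X)

theorem neg_neg' (x : X) : A.neg (A.neg x) = x := A.imp_involutive x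

theorem imp_neg_comm (x y : X) : A.imp x (A.neg y) = A.imp y (A.neg x) := A.exchange x y A.zero

theorem neg_zero' : A.neg A.zero = A.one := A.zero_imp _

/-- The monoid `(X, ⊕, 0)`, where `x ⊕ y = x* → y`. -/
@[reducible] def addMonoid : AddCommMonoid X where
  add x y := A.imp (A.neg x) y
  zero := A.zero
  add_comm x y := by
    change A.imp (A.neg x) y = A.imp (A.neg y) x
    rw [← A.neg_neg' y, imp_neg_comm, A.neg_neg', A.neg_neg']
  add_assoc x y z := by
    change A.imp (A.neg (A.imp (A.neg x) y)) z = A.imp (A.neg x) (A.imp (A.neg y) z)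
    rw [← A.neg_neg' z, imp_neg_comm, A.neg_neg', imp_neg_comm A (A.neg y), A.neg_neg',
      A.exchange (A.neg x)]
  zero_add x := by
    change A.imp (A.neg A.zero) x = x
    rw [neg_zero', A.one_imp]
  add_zero x := A.imp_involutive x
  nsmul := @nsmulRec X ⟨A.zero⟩ ⟨fun x y => A.imp (A.neg x) y⟩

end InvBE

/-- An IOM algebra is a QW algebra iff it satisfies (IOM₂): `(x ⊓ y) → (y ⊓ x) = 1`. -/
theorem stmt_13 {X : Type*} (A : InvBE X) (hA : A.IOM) :
    A.QW ↔ ∀ x y : X, A.imp (A.inf x y) (A.inf y x) = A.one := by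
  let _ := A.addMonoid
  have himp : ∀ x y, A.imp x y = A.neg x + y := fun x y => by
    change _ = A.imp (A.neg (A.neg x)) y
    rw [A.neg_neg']
  have hone : A.one = A.neg 0 := A.neg_zero'.symm
  have hinf : ∀ x y, A.inf x y = IOMAux.meet A.neg x y := fun x y => by
    simp only [InvBE.inf, himp, A.neg_neg', IOMAux.meet]
  have h : IOMAux.IsIOM A.neg := by
    refine ⟨A.neg_neg', fun x => ?_, fun x y => ?_⟩
    · rw [← hone]
      exact A.imp_self _
    · have e := hA x (A.neg y)
      rwa [hinf, himp, A.neg_neg', add_comm] at e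
  have e := IOMAux.qw_iff h
  simp only [InvBE.QW, hinf, hone]
  simpa only [himp] using e
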